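/- Cut-off estimates (Lemma A.5): Let d ≥ 1, η ∈ (0,1/4), C₀ > 0, and let θ : ℝ → ℝ be a smooth compactly supported function with 0 ≤ θ ≤ 1, θ(s) = 0 for |s| ≥ 1 − 2η, θ(s) = 1 for |s| ≤ 1 − 3η, and |θ^{(j)}(s)| ≤ C₀·η^{−j} for all s and j = 1, 2, 3. Set Θ(x) := θ(|x|²) for x ∈ ℝ^d. Then there is a constant C, depending only on d and C₀ (not on η, θ, or ψ), such that: (i) for every k ∈ {0,1,2} and every ψ ∈ W^{k,∞}(ℝ^d) vanishing outside the closed unit ball, ‖Θψ‖_{W^{k,∞}} ≤ C·‖ψ‖_{W^{k,∞}}; (ii) for all integers 0 ≤ ℓ ≤ k ≤ 3 and every ψ ∈ W^{k,∞}(ℝ^d) vanishing outside the closed unit ball, ‖(1 − Θ)ψ‖_{W^{ℓ,∞}} ≤ C·η^{k−ℓ}·‖ψ‖_{W^{k,∞}}. -/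

import Mathlib

open scoped NNReal

/-- `ψ ∈ W^{k,∞}` with `‖ψ‖_{W^{k,∞}} ≤ A`.  For `k = 0` this means `ψ` is a
bounded measurable function with `sup|ψ| ≤ A`; for `k = m+1` it means `ψ` is
`C^m`, `sup‖D^jψ‖ ≤ A` for `j ≤ m`, and `D^mψ` is `A`-Lipschitz. -/
def WBound {E : Type*} [NormedAddCommGroup E] [NormedSpace ℝ E]
    [MeasurableSpace E] (k : ℕ) (A : ℝ) (ψ : E → ℝ) : Prop :=
  match k with
  | 0 => Measurable ψ ∧ ∀ x, |ψ x| ≤ A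
  | (m + 1) =>
      ContDiff ℝ m ψ ∧ (∀ j ≤ m, ∀ x, ‖iteratedFDeriv ℝ j ψ x‖ ≤ A) ∧
      LipschitzWith A.toNNReal (iteratedFDeriv ℝ m ψ)

/-!
The function `ψ` vanishes outside the unit ball, so its derivatives of order less than `k` vanish on
the unit sphere, and Taylor's formula gives `D^jψ = O(η^{k-j})` within `O(η)` of the sphere. Where
`ψ` does not vanish, `1 - Θ` lives in that shell, with `D^i(1 - Θ) = O(η^{-i})`. Both bounds say
how large a jet is at the length scale `η`, so by the Leibniz rule the jet of `(1 - Θ)ψ` has size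
`O(η^k)` at that scale. Since `D^{k-1}ψ` is only Lipschitz, the top-order bound comes from the
discrete Leibniz rule for `Δ_h((1 - Θ)ψ)`: for `‖h‖ ≤ η` the segment from `x` to `x + h` stays
near one point of the sphere, and for larger `h` the bounds on the derivatives suffice. Finally
`Θψ = ψ - (1 - Θ)ψ`.
-/

open Metric Set
open scoped fwdDiff

lemma fwdDiff_mul {M R : Type*} [AddCommMonoid M] [Ring R] (h : M) (f g : M → R) :
    Δ_[h] (f * g) = (fun z => f (z + h)) * Δ_[h] g + Δ_[h] f * g := by
  ext z
  simp only [fwdDiff, Pi.mul_apply, Pi.add_apply]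
  noncomm_ring

section ScaledJets

variable {E F G 𝔸 : Type*} [NormedAddCommGroup E] [NormedSpace ℝ E]
  [NormedAddCommGroup F] [NormedSpace ℝ F] [NormedAddCommGroup G] [NormedSpace ℝ G]
  [NormedRing 𝔸] [NormedAlgebra ℝ 𝔸]

/-- The derivatives of `f` at `x` up to order `N` are bounded by `B` after rescaling lengths by
`r`. Measuring every derivative at the same scale keeps powers of `r` out of the Leibniz rule. -/
def JetBoundAt (r : ℝ) (N : ℕ) (B : ℝ) (f : E → F) (x : E) : Prop :=
  ∀ j ≤ N, ‖iteratedFDeriv ℝ j f x‖ ≤ B / r ^ j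

namespace JetBoundAt

variable {r s B B' : ℝ} {M N : ℕ} {f g : E → F} {x h : E}

lemma nonneg (hf : JetBoundAt r N B f x) : 0 ≤ B := by
  simpa using (norm_nonneg _).trans (hf 0 N.zero_le)

lemma mono_order (hMN : M ≤ N) (hf : JetBoundAt r N B f x) : JetBoundAt r M B f x :=
  fun j hj => hf j (hj.trans hMN)

lemma mono_scale (hs : 0 < s) (hsr : s ≤ r) (hf : JetBoundAt r N B f x) :
    JetBoundAt s N B f x := fun j hj =>
  (hf j hj).trans <| div_le_div_of_nonneg_left hf.nonneg (by positivity) (by gcongr)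

lemma mono (hr : 0 < r) (hB : B ≤ B') (hf : JetBoundAt r N B f x) :
    JetBoundAt r N B' f x := fun j hj => (hf j hj).trans (by gcongr)

lemma of_notMem_tsupport (hr : 0 < r) (hB : 0 ≤ B) (hx : x ∉ tsupport f) :
    JetBoundAt r N B f x := fun j _ => by
  rw [image_eq_zero_of_notMem_tsupport fun hj => hx (tsupport_iteratedFDeriv_subset j hj),
    norm_zero]
  positivity

lemma add (hf : ContDiff ℝ N f) (hg : ContDiff ℝ N g) (hfB : JetBoundAt r N B f x)
    (hgB : JetBoundAt r N B' g x) : JetBoundAt r N (B + B') (f + g) x := fun j hj => by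
  have hjN : (j : WithTop ℕ∞) ≤ N := mod_cast hj
  rw [iteratedFDeriv_add_apply (hf.of_le hjN).contDiffAt (hg.of_le hjN).contDiffAt, add_div]
  exact norm_add_le_of_le (hfB j hj) (hgB j hj)

lemma sub (hf : ContDiff ℝ N f) (hg : ContDiff ℝ N g) (hfB : JetBoundAt r N B f x)
    (hgB : JetBoundAt r N B' g x) : JetBoundAt r N (B + B') (f - g) x := fun j hj => by
  have hjN : (j : WithTop ℕ∞) ≤ N := mod_cast hj
  rw [iteratedFDeriv_sub_apply (hf.of_le hjN).contDiffAt (hg.of_le hjN).contDiffAt, add_div]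
  exact norm_sub_le_of_le (hfB j hj) (hgB j hj)

lemma comp_add_right (hf : JetBoundAt r N B f (x + h)) :
    JetBoundAt r N B (fun z => f (z + h)) x := fun j hj => by
  rw [iteratedFDeriv_comp_add_right]
  exact hf j hj

lemma mul {f g : E → 𝔸} (hr : 0 < r) (hf : ContDiff ℝ N f) (hg : ContDiff ℝ N g)
    (hfB : JetBoundAt r N B f x) (hgB : JetBoundAt r N B' g x) :
    JetBoundAt r N (2 ^ N * (B * B')) (f * g) x := fun j hj => by
  have hB := hfB.nonneg
  have hB' := hgB.nonneg
  calc ‖iteratedFDeriv ℝ j (f * g) x‖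
      ≤ ∑ i ∈ Finset.range (j + 1), (j.choose i : ℝ) * ‖iteratedFDeriv ℝ i f x‖ *
          ‖iteratedFDeriv ℝ (j - i) g x‖ :=
        norm_iteratedFDeriv_mul_le hf hg x (mod_cast hj)
    _ ≤ ∑ i ∈ Finset.range (j + 1), (j.choose i : ℝ) * (B * B' / r ^ j) := by
        refine Finset.sum_le_sum fun i hi => ?_
        have hij : i ≤ j := Finset.mem_range_succ_iff.1 hi
        calc (j.choose i : ℝ) * ‖iteratedFDeriv ℝ i f x‖ * ‖iteratedFDeriv ℝ (j - i) g x‖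
            ≤ j.choose i * (B / r ^ i) * (B' / r ^ (j - i)) := by
              gcongr
              exacts [hfB i (hij.trans hj), hgB (j - i) ((j.sub_le i).trans hj)]
          _ = j.choose i * (B * B' / r ^ j) := by
              rw [mul_assoc, div_mul_div_comm, ← pow_add, Nat.add_sub_of_le hij]
    _ = 2 ^ j * (B * B') / r ^ j := by
        rw [← Finset.sum_mul, ← mul_div_assoc]
        exact_mod_cast congrArg (fun m : ℕ => (m : ℝ) * (B * B') / r ^ j)
          (Nat.sum_range_choose j)
    _ ≤ 2 ^ N * (B * B') / r ^ j := by gcongr; norm_num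

lemma comp {g : G → F} {f : E → G} {D : ℝ} (hr : 0 < r) (hD : 1 ≤ D) (hg : ContDiff ℝ N g)
    (hf : ContDiff ℝ N f) (hgB : JetBoundAt r N B g (f x))
    (hfD : ∀ i, 1 ≤ i → i ≤ N → ‖iteratedFDeriv ℝ i f x‖ ≤ r * (D / r) ^ i) :
    JetBoundAt r N (N.factorial * B * D ^ N) (g ∘ f) x := fun j hj => by
  have hB := hgB.nonneg
  -- `norm_iteratedFDeriv_comp_le` wants an outer bound independent of the order
  have h_rescale : g ∘ f = (fun z => g (r • z)) ∘ (r⁻¹ • f) := by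
    ext z; simp [smul_inv_smul₀ hr.ne']
  have h_outer (i : ℕ) (hi : i ≤ j) :
      ‖iteratedFDeriv ℝ i (fun z => g (r • z)) ((r⁻¹ • f) x)‖ ≤ B := by
    have hiN : i ≤ N := hi.trans hj
    rw [iteratedFDeriv_comp_const_smul r (hg.of_le (mod_cast hiN)), Pi.smul_apply]
    beta_reduce
    rw [smul_inv_smul₀ hr.ne', norm_smul, Real.norm_of_nonneg (by positivity),
      ← le_div_iff₀' (by positivity)]
    exact hgB i hiN
  have h_inner (i : ℕ) (h1i : 1 ≤ i) (hi : i ≤ j) :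
      ‖iteratedFDeriv ℝ i (r⁻¹ • f) x‖ ≤ (D / r) ^ i := by
    have hiN : i ≤ N := hi.trans hj
    rw [iteratedFDeriv_const_smul_apply (hf.of_le (mod_cast hiN)).contDiffAt, norm_smul,
      Real.norm_of_nonneg (by positivity), inv_mul_le_iff₀ hr]
    exact hfD i h1i hiN
  calc ‖iteratedFDeriv ℝ j (g ∘ f) x‖ ≤ j.factorial * B * (D / r) ^ j := by
        rw [h_rescale]
        exact norm_iteratedFDeriv_comp_le (hg.comp (contDiff_const_smul r)) (hf.const_smul r⁻¹)
          (mod_cast hj) x h_outer h_inner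
    _ = j.factorial * B * D ^ j / r ^ j := by rw [div_pow, mul_div_assoc]
    _ ≤ N.factorial * B * D ^ N / r ^ j := by gcongr

end JetBoundAt

section MeanValue

variable {f : E → F} {s : Set E} {n : ℕ} {r B : ℝ} {x y h : E}

lemma norm_iteratedFDeriv_sub_le_of_convex {j : ℕ} {C : ℝ} (hf : ContDiff ℝ n f) (hj : j < n)
    (hs : Convex ℝ s) (hC : ∀ z ∈ s, ‖iteratedFDeriv ℝ (j + 1) f z‖ ≤ C) (hx : x ∈ s)
    (hy : y ∈ s) : ‖iteratedFDeriv ℝ j f y - iteratedFDeriv ℝ j f x‖ ≤ C * ‖y - x‖ :=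
  hs.norm_image_sub_le_of_norm_fderiv_le (𝕜 := ℝ)
    (fun z _ => hf.differentiable_iteratedFDeriv (mod_cast hj) z)
    (fun z hz => by rw [norm_fderiv_iteratedFDeriv]; exact hC z hz) hx hy

lemma iteratedFDeriv_fwdDiff {j : ℕ} (hf : ContDiff ℝ j f) (h x : E) :
    iteratedFDeriv ℝ j (Δ_[h] f) x = iteratedFDeriv ℝ j f (x + h) - iteratedFDeriv ℝ j f x := by
  rw [← iteratedFDeriv_comp_add_right]
  exact iteratedFDeriv_sub_apply (hf.comp (by fun_prop)).contDiffAt hf.contDiffAt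

lemma contDiff_fwdDiff (hf : ContDiff ℝ n f) (h : E) : ContDiff ℝ n (Δ_[h] f) :=
  (hf.comp (contDiff_id.add contDiff_const)).sub hf

lemma jetBoundAt_fwdDiff (hf : ContDiff ℝ (n + 1 : ℕ) f) (hs : Convex ℝ s)
    (hB : ∀ z ∈ s, JetBoundAt r (n + 1) B f z) (hx : x ∈ s) (hxh : x + h ∈ s) :
    JetBoundAt r n (B / r * ‖h‖) (Δ_[h] f) x := fun j hj => by
  rw [iteratedFDeriv_fwdDiff (hf.of_le (mod_cast hj.trans n.le_succ))]
  calc _ ≤ B / r ^ (j + 1) * ‖x + h - x‖ :=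
        norm_iteratedFDeriv_sub_le_of_convex hf (by omega) hs
          (fun z hz => hB z hz (j + 1) (by omega)) hx hxh
    _ = B / r * ‖h‖ / r ^ j := by rw [add_sub_cancel_left, pow_succ']; ring

end MeanValue

section VanishingJet

variable {f : E → F} {y x h : E} {n : ℕ} {L : ℝ≥0} {R : ℝ}

lemma norm_iteratedFDeriv_sub_le_of_jet_eq_zero (hR : 0 ≤ R) (hf : ContDiff ℝ n f)
    (hL : LipschitzOnWith L (iteratedFDeriv ℝ n f) (closedBall y R))
    (hy : ∀ j ≤ n, iteratedFDeriv ℝ j f y = 0) {j : ℕ} (hj : j ≤ n) :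
    ∀ x ∈ closedBall y R, ∀ z ∈ closedBall y R,
      ‖iteratedFDeriv ℝ j f z - iteratedFDeriv ℝ j f x‖ ≤ L * R ^ (n - j) * ‖z - x‖ := by
  induction hj using Nat.decreasingInduction with
  | self =>
    intro x hx z hz
    simpa [dist_eq_norm] using hL.dist_le_mul z hz x hx
  | of_succ j hj ih =>
    intro x hx z hz
    refine norm_iteratedFDeriv_sub_le_of_convex hf hj (convex_closedBall y R)
      (fun w hw => ?_) hx hz
    calc ‖iteratedFDeriv ℝ (j + 1) f w‖
        ≤ L * R ^ (n - (j + 1)) * ‖w - y‖ := by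
          simpa [hy (j + 1) hj] using ih y (mem_closedBall_self hR) w hw
      _ ≤ L * R ^ (n - (j + 1)) * R := by
          gcongr
          exact mem_closedBall_iff_norm.1 hw
      _ = L * R ^ (n - j) := by
          rw [mul_assoc, ← pow_succ, show n - (j + 1) + 1 = n - j by omega]

lemma jetBoundAt_fwdDiff_of_jet_eq_zero (hR : 0 < R) (hf : ContDiff ℝ n f)
    (hL : LipschitzOnWith L (iteratedFDeriv ℝ n f) (closedBall y R))
    (hy : ∀ j ≤ n, iteratedFDeriv ℝ j f y = 0) (hx : x ∈ closedBall y R)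
    (hxh : x + h ∈ closedBall y R) :
    JetBoundAt R n (L * R ^ n * ‖h‖) (Δ_[h] f) x := fun j hj => by
  rw [iteratedFDeriv_fwdDiff (hf.of_le (mod_cast hj))]
  calc _ ≤ L * R ^ (n - j) * ‖x + h - x‖ :=
        norm_iteratedFDeriv_sub_le_of_jet_eq_zero hR.le hf hL hy hj x hx (x + h) hxh
    _ = L * R ^ n * ‖h‖ / R ^ j := by
        rw [add_sub_cancel_left, pow_sub₀ R hR.ne' hj]; ring

lemma jetBoundAt_of_jet_eq_zero (hR : 0 < R) (hf : ContDiff ℝ n f)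
    (hL : LipschitzOnWith L (iteratedFDeriv ℝ n f) (closedBall y R))
    (hy : ∀ j ≤ n, iteratedFDeriv ℝ j f y = 0) (hx : x ∈ closedBall y R) :
    JetBoundAt R n (L * R ^ (n + 1)) f x := fun j hj => by
  calc ‖iteratedFDeriv ℝ j f x‖
      ≤ L * R ^ (n - j) * ‖x - y‖ := by
        simpa [hy j hj] using norm_iteratedFDeriv_sub_le_of_jet_eq_zero hR.le hf hL hy hj y
          (mem_closedBall_self hR.le) x hx
    _ ≤ L * R ^ (n - j) * R := by
        gcongr
        exact mem_closedBall_iff_norm.1 hx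
    _ = L * R ^ (n + 1) / R ^ j := by rw [pow_sub₀ R hR.ne' hj]; ring

lemma iteratedFDeriv_eq_zero_of_mem_closure_compl_tsupport {j : ℕ} (hf : ContDiff ℝ n f)
    (hj : j ≤ n) (hy : y ∈ closure (tsupport f)ᶜ) : iteratedFDeriv ℝ j f y = 0 := by
  have hclosed : IsClosed {z | iteratedFDeriv ℝ j f z = 0} :=
    isClosed_eq (hf.continuous_iteratedFDeriv (mod_cast hj)) continuous_const
  refine closure_minimal (fun z hz => ?_) hclosed hy
  exact image_eq_zero_of_notMem_tsupport fun hjz => hz (tsupport_iteratedFDeriv_subset j hjz)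

end VanishingJet

section Product

variable {φ ψ : E → 𝔸} {x y h : E} {n : ℕ} {L : ℝ≥0} {r R K : ℝ}

lemma jetBoundAt_mul_of_jet_eq_zero (hr : 0 < r) (hrR : r ≤ R) (hφ : ContDiff ℝ n φ)
    (hφK : JetBoundAt r n K φ x) (hψ : ContDiff ℝ n ψ)
    (hL : LipschitzOnWith L (iteratedFDeriv ℝ n ψ) (closedBall y R))
    (hy : ∀ j ≤ n, iteratedFDeriv ℝ j ψ y = 0) (hx : x ∈ closedBall y R) :
    JetBoundAt r n ((2 * R) ^ (n + 1) * K * L / 2) (φ * ψ) x := by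
  have hψL := (jetBoundAt_of_jet_eq_zero (hr.trans_le hrR) hψ hL hy hx).mono_scale hr hrR
  exact (hφK.mul hr hφ hψ hψL).mono hr (le_of_eq (by ring))

lemma jetBoundAt_fwdDiff_mul_of_jet_eq_zero (hr : 0 < r) (hrR : r ≤ R)
    (hφ : ContDiff ℝ (n + 1 : ℕ) φ)
    (hφK : ∀ z ∈ closedBall y R, JetBoundAt r (n + 1) K φ z) (hψ : ContDiff ℝ n ψ)
    (hL : LipschitzOnWith L (iteratedFDeriv ℝ n ψ) (closedBall y R))
    (hy : ∀ j ≤ n, iteratedFDeriv ℝ j ψ y = 0) (hx : x ∈ closedBall y R)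
    (hxh : x + h ∈ closedBall y R) :
    JetBoundAt r n ((2 * R) ^ (n + 1) * K * L * (‖h‖ / r)) (Δ_[h] (φ * ψ)) x := by
  have hR : 0 < R := hr.trans_le hrR
  have hK : 0 ≤ K := (hφK x hx).nonneg
  have hφn : ContDiff ℝ n φ := hφ.of_le (mod_cast n.le_succ)
  have hφh : ContDiff ℝ n (fun z => φ (z + h)) := hφn.comp (by fun_prop)
  have hφ_shift : JetBoundAt r n K (fun z => φ (z + h)) x :=
    ((hφK _ hxh).mono_order n.le_succ).comp_add_right
  have hφ_diff := jetBoundAt_fwdDiff hφ (convex_closedBall y R) hφK hx hxh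
  have hψ_jet := (jetBoundAt_of_jet_eq_zero hR hψ hL hy hx).mono_scale hr hrR
  have hψ_diff := (jetBoundAt_fwdDiff_of_jet_eq_zero hR hψ hL hy hx hxh).mono_scale hr hrR
  rw [fwdDiff_mul]
  refine ((hφ_shift.mul hr hφh (contDiff_fwdDiff hψ h) hψ_diff).add
    (hφh.mul (contDiff_fwdDiff hψ h)) ((contDiff_fwdDiff hφn h).mul hψ)
    (hφ_diff.mul hr (contDiff_fwdDiff hφn h) hψ hψ_jet)).mono hr ?_
  calc 2 ^ n * (K * (L * R ^ n * ‖h‖)) + 2 ^ n * (K / r * ‖h‖ * (L * R ^ (n + 1)))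
      = 2 ^ n * K * L * R ^ n * ‖h‖ * (1 + R / r) := by ring
    _ ≤ 2 ^ n * K * L * R ^ n * ‖h‖ * (R / r + R / r) := by
        gcongr
        exact (one_le_div hr).2 hrR
    _ = (2 * R) ^ (n + 1) * K * L * (‖h‖ / r) := by ring

/-- `ψ` has vanishing `n`-jet at some point within `R - r` of `x`, and on the ball of radius `R`
about that point `φ` has jets of order `n + 1` bounded by `K` at scale `r`. The margin `r` keeps
the `r`-neighbourhood of `x` inside the ball. -/
def NearJetZero (r R K : ℝ) (n : ℕ) (φ ψ : E → 𝔸) (x : E) : Prop :=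
  ∃ y, dist x y ≤ R - r ∧ (∀ j ≤ n, iteratedFDeriv ℝ j ψ y = 0) ∧
    ∀ z ∈ closedBall y R, JetBoundAt r (n + 1) K φ z

lemma jetBoundAt_mul_of_nearJetZero (hr : 0 < r) (hrR : r ≤ R) (hK : 0 ≤ K)
    (hφ : ContDiff ℝ n φ) (hψ : ContDiff ℝ n ψ) (hL : LipschitzWith L (iteratedFDeriv ℝ n ψ))
    (hnear : ∀ x ∈ tsupport φ ∩ tsupport ψ, NearJetZero r R K n φ ψ x) (x : E) :
    JetBoundAt r n ((2 * R) ^ (n + 1) * K * L / 2) (φ * ψ) x := by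
  have hR : 0 < R := hr.trans_le hrR
  by_cases hx : x ∈ tsupport (φ * ψ)
  · obtain ⟨y, hxy, hy, hφK⟩ :=
      hnear x ⟨tsupport_mul_subset_left hx, tsupport_mul_subset_right hx⟩
    have hxR : x ∈ closedBall y R := mem_closedBall.2 (by linarith)
    exact jetBoundAt_mul_of_jet_eq_zero hr hrR hφ ((hφK x hxR).mono_order n.le_succ) hψ
      hL.lipschitzOnWith hy hxR
  · exact .of_notMem_tsupport hr (by positivity) hx

lemma exists_mem_closedBall_of_nearJetZero (hh : ‖h‖ ≤ r)
    (hnear : ∀ x ∈ tsupport φ ∩ tsupport ψ, NearJetZero r R K n φ ψ x)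
    (hx : x ∈ tsupport (φ * ψ) ∨ x + h ∈ tsupport (φ * ψ)) :
    ∃ y, x ∈ closedBall y R ∧ x + h ∈ closedBall y R ∧
      (∀ j ≤ n, iteratedFDeriv ℝ j ψ y = 0) ∧
      ∀ z ∈ closedBall y R, JetBoundAt r (n + 1) K φ z := by
  have hdist : dist (x + h) x = ‖h‖ := by rw [dist_eq_norm, add_sub_cancel_left]
  have hmul {w : E} (hw : w ∈ tsupport (φ * ψ)) : NearJetZero r R K n φ ψ w :=
    hnear w ⟨tsupport_mul_subset_left hw, tsupport_mul_subset_right hw⟩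
  rcases hx with hx | hx <;> obtain ⟨y, hxy, hy, hφK⟩ := hmul hx <;>
    refine ⟨y, mem_closedBall.2 ?_, mem_closedBall.2 ?_, hy, hφK⟩
  · linarith [norm_nonneg h]
  · linarith [dist_triangle (x + h) x y]
  · linarith [dist_triangle_left x y (x + h)]
  · linarith [norm_nonneg h]

lemma jetBoundAt_fwdDiff_mul_of_nearJetZero (hr : 0 < r) (hrR : r ≤ R) (hK : 0 ≤ K)
    (hφ : ContDiff ℝ (n + 1 : ℕ) φ) (hψ : ContDiff ℝ n ψ)
    (hL : LipschitzWith L (iteratedFDeriv ℝ n ψ))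
    (hnear : ∀ x ∈ tsupport φ ∩ tsupport ψ, NearJetZero r R K n φ ψ x) (x h : E) :
    JetBoundAt r n ((2 * R) ^ (n + 1) * K * L * (‖h‖ / r)) (Δ_[h] (φ * ψ)) x := by
  have hR : 0 < R := hr.trans_le hrR
  have hφn : ContDiff ℝ n φ := hφ.of_le (mod_cast n.le_succ)
  have hprod : ContDiff ℝ n (φ * ψ) := hφn.mul hψ
  have hprod_h : ContDiff ℝ n (fun z => (φ * ψ) (z + h)) := hprod.comp (by fun_prop)
  rcases le_or_gt ‖h‖ r with hh | hh
  · by_cases hx : x ∈ tsupport (φ * ψ) ∨ x + h ∈ tsupport (φ * ψ)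
    · obtain ⟨y, hxy, hxhy, hy, hφK⟩ := exists_mem_closedBall_of_nearJetZero hh hnear hx
      exact jetBoundAt_fwdDiff_mul_of_jet_eq_zero hr hrR hφ hφK hψ hL.lipschitzOnWith hy hxy hxhy
    · obtain ⟨hx, hxh⟩ := not_or.1 hx
      have h_zero (w : E) (hw : w ∉ tsupport (φ * ψ)) : JetBoundAt r n 0 (φ * ψ) w :=
        .of_notMem_tsupport hr le_rfl hw
      exact ((h_zero _ hxh).comp_add_right.sub hprod_h hprod (h_zero _ hx)).mono hr
        (by rw [add_zero]; positivity)
  · have hbound := jetBoundAt_mul_of_nearJetZero hr hrR hK hφn hψ hL hnear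
    refine ((hbound (x + h)).comp_add_right.sub hprod_h hprod (hbound x)).mono hr ?_
    rw [add_halves]
    exact le_mul_of_one_le_right (by positivity) ((one_le_div hr).2 hh.le)

end Product

end ScaledJets

namespace WBound

section Normed

variable {E : Type*} [NormedAddCommGroup E] [NormedSpace ℝ E] [MeasurableSpace E]
  {k l n : ℕ} {A B r R K : ℝ} {f g φ ψ : E → ℝ}

lemma nonneg (hf : WBound k A f) : 0 ≤ A := by
  cases k with
  | zero => exact (abs_nonneg _).trans (hf.2 0)
  | succ m => exact (norm_nonneg _).trans (hf.2.1 0 m.zero_le 0)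

lemma mono (hAB : A ≤ B) (hf : WBound k A f) : WBound k B f := by
  cases k with
  | zero => exact ⟨hf.1, fun x => (hf.2 x).trans hAB⟩
  | succ m =>
    exact ⟨hf.1, fun j hj x => (hf.2.1 j hj x).trans hAB,
      hf.2.2.weaken (Real.toNNReal_le_toNNReal hAB)⟩

lemma sub (hf : WBound k A f) (hg : WBound k B g) : WBound k (A + B) (f - g) := by
  cases k with
  | zero =>
    exact ⟨hf.1.sub hg.1, fun x => (abs_sub _ _).trans (add_le_add (hf.2 x) (hg.2 x))⟩
  | succ m =>
    refine ⟨hf.1.sub hg.1, fun j hj x => ?_, ?_⟩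
    · have hjm : (j : WithTop ℕ∞) ≤ m := mod_cast hj
      rw [iteratedFDeriv_sub_apply (hf.1.of_le hjm).contDiffAt (hg.1.of_le hjm).contDiffAt]
      exact norm_sub_le_of_le (hf.2.1 j hj x) (hg.2.1 j hj x)
    · rw [iteratedFDeriv_sub hf.1 hg.1, Real.toNNReal_add hf.nonneg hg.nonneg]
      exact hf.2.2.sub hg.2.2

lemma bounded_mul (hφ : Measurable φ) (hφK : ∀ x, |φ x| ≤ K) (hψ : WBound 0 A ψ) :
    WBound 0 (K * A) (φ * ψ) :=
  ⟨hφ.mul hψ.1, fun x => (abs_mul _ _).trans_le <|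
    mul_le_mul (hφK x) (hψ.2 x) (abs_nonneg _) ((abs_nonneg _).trans (hφK x))⟩

lemma of_jetBoundAt_fwdDiff {m : ℕ} (hr : 0 < r) (hr1 : r ≤ 1) (hf : ContDiff ℝ m f)
    (hfB : ∀ x, JetBoundAt r m B f x)
    (hΔ : ∀ x h, JetBoundAt r m (B * (‖h‖ / r)) (Δ_[h] f) x) :
    WBound (m + 1) (B / r ^ (m + 1)) f := by
  have hB : 0 ≤ B := (hfB 0).nonneg
  refine ⟨hf, fun j hj x => (hfB x j hj).trans ?_, LipschitzWith.of_dist_le' fun x y => ?_⟩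
  · exact div_le_div_of_nonneg_left hB (by positivity)
      (pow_le_pow_of_le_one hr.le hr1 (by omega))
  · have hxy := hΔ y (x - y) m le_rfl
    rw [iteratedFDeriv_fwdDiff hf, add_sub_cancel] at hxy
    rw [dist_eq_norm, dist_eq_norm]
    exact hxy.trans_eq (by rw [pow_succ]; field_simp)

lemma mul_of_nearJetZero [OpensMeasurableSpace E] (hr : 0 < r) (hr1 : r ≤ 1) (hrR : r ≤ R)
    (hK : 0 ≤ K) (hφ : ContDiff ℝ (n + 1 : ℕ) φ) (hψ : WBound (n + 1) A ψ)
    (hnear : ∀ x ∈ tsupport φ ∩ tsupport ψ, NearJetZero r R K n φ ψ x) (hl : l ≤ n + 1) :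
    WBound l ((2 * R) ^ (n + 1) * K * A / r ^ l) (φ * ψ) := by
  have hψC : ContDiff ℝ n ψ := hψ.1
  have hψL := hψ.2.2
  have hA : 0 ≤ A := hψ.nonneg
  have hR : 0 < R := hr.trans_le hrR
  have hφn : ContDiff ℝ n φ := hφ.of_le (mod_cast n.le_succ)
  have hsup (x : E) := jetBoundAt_mul_of_nearJetZero hr hrR hK hφn hψC hψL hnear x
  have hΔ (x h : E) := jetBoundAt_fwdDiff_mul_of_nearJetZero hr hrR hK hφ hψC hψL hnear x h
  simp only [Real.coe_toNNReal A hA] at hsup hΔ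
  have hhalf : (2 * R) ^ (n + 1) * K * A / 2 ≤ (2 * R) ^ (n + 1) * K * A :=
    half_le_self (by positivity)
  cases l with
  | zero =>
    refine ⟨(hφn.continuous.mul hψC.continuous).measurable, fun x => ?_⟩
    simpa using (hsup x).mono hr hhalf 0 n.zero_le
  | succ m =>
    have hmn : m ≤ n := Nat.le_of_succ_le_succ hl
    exact of_jetBoundAt_fwdDiff hr hr1 ((hφn.mul hψC).of_le (mod_cast hmn))
      (fun x => ((hsup x).mono hr hhalf).mono_order hmn) fun x h => (hΔ x h).mono_order hmn

end Normed

end WBound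

lemma tsupport_subset_closedBall {E F : Type*} [SeminormedAddGroup E] [Zero F] {f : E → F}
    (hf : ∀ x, 1 < ‖x‖ → f x = 0) : tsupport f ⊆ closedBall 0 1 :=
  closure_minimal (fun _ hx => mem_closedBall_zero_iff.2 (not_lt.1 fun h => hx (hf _ h)))
    isClosed_closedBall

section UnitBall

variable {E F : Type*} [NormedAddCommGroup E] [NormedSpace ℝ E] [Zero F] {f : E → F} {x y : E}

lemma mem_closure_compl_tsupport_of_norm_eq_one (hf : ∀ x, 1 < ‖x‖ → f x = 0)
    (hy : ‖y‖ = 1) : y ∈ closure (tsupport f)ᶜ := by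
  refine closure_mono (compl_subset_compl.2 (tsupport_subset_closedBall hf)) ?_
  rw [closure_compl, interior_closedBall 0 one_ne_zero]
  simp [hy]

lemma exists_norm_eq_one_dist_eq (hx : x ≠ 0) : ∃ y : E, ‖y‖ = 1 ∧ dist x y = |‖x‖ - 1| := by
  have hx' : ‖x‖ ≠ 0 := norm_ne_zero_iff.2 hx
  refine ⟨‖x‖⁻¹ • x, norm_smul_inv_norm hx, ?_⟩
  calc dist x (‖x‖⁻¹ • x) = ‖(1 - ‖x‖⁻¹) • x‖ := by rw [dist_eq_norm, sub_smul, one_smul]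
    _ = |(1 - ‖x‖⁻¹) * ‖x‖| := by rw [norm_smul, Real.norm_eq_abs, abs_mul, abs_norm]
    _ = |‖x‖ - 1| := by rw [sub_mul, one_mul, inv_mul_cancel₀ hx']

end UnitBall

lemma norm_iteratedFDeriv_clm_le {E F : Type*} [NormedAddCommGroup E] [NormedSpace ℝ E]
    [NormedAddCommGroup F] [NormedSpace ℝ F] (T : E →L[ℝ] F) (i : ℕ) (x : E) :
    ‖iteratedFDeriv ℝ i T x‖ ≤ ‖T‖ * max 1 ‖x‖ := by
  match i with
  | 0 =>
    rw [norm_iteratedFDeriv_zero]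
    exact T.le_opNorm_of_le (le_max_right _ _)
  | 1 =>
    rw [norm_iteratedFDeriv_one, T.fderiv]
    exact le_mul_of_one_le_right (norm_nonneg T) (le_max_left _ _)
  | i + 2 =>
    have h_fderiv : fderiv ℝ T = fun _ => T := funext fun _ => T.fderiv
    rw [← norm_iteratedFDeriv_fderiv, h_fderiv, iteratedFDeriv_succ_const]
    simp

/-- `θ` is the profile of a radial cut-off `x ↦ θ (‖x‖ ^ 2)` to the unit ball that varies at length
scale `η`, with derivatives controlled up to order `N`. -/
structure IsCutoffProfile (N : ℕ) (C₀ η : ℝ) (θ : ℝ → ℝ) : Prop where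
  contDiff : ContDiff ℝ N θ
  mem_Icc : ∀ s, θ s ∈ Icc 0 1
  eq_one : ∀ s, |s| ≤ 1 - 3 * η → θ s = 1
  abs_iteratedDeriv_le : ∀ j : ℕ, 1 ≤ j → j ≤ N → ∀ s, |iteratedDeriv j θ s| ≤ C₀ * (η ^ j)⁻¹

lemma le_norm_sq_of_mem_tsupport_one_sub_cutoff {E : Type*} [SeminormedAddGroup E] {a : ℝ}
    {θ : ℝ → ℝ} {x : E} (hθ1 : ∀ s : ℝ, |s| ≤ a → θ s = 1)
    (hx : x ∈ tsupport (fun z : E => 1 - θ (‖z‖ ^ 2))) : a ≤ ‖x‖ ^ 2 := by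
  refine closure_minimal (t := {z : E | a ≤ ‖z‖ ^ 2}) (fun z hz => ?_)
    (isClosed_le continuous_const (by fun_prop)) hx
  by_contra hlt
  have hθz : θ (‖z‖ ^ 2) = 1 := hθ1 _ ((abs_of_nonneg (by positivity)).trans_le (not_le.1 hlt).le)
  exact hz (sub_eq_zero.2 hθz.symm)

section RadialCutoff

variable {E : Type*} [NormedAddCommGroup E] [InnerProductSpace ℝ E]
  {N k l : ℕ} {η A B C₀ : ℝ} {f θ : ℝ → ℝ} {ψ : E → ℝ} {x : E}

lemma norm_iteratedFDeriv_norm_sq_le {i : ℕ} (hi : 1 ≤ i) (x : E) :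
    ‖iteratedFDeriv ℝ i (fun z : E => ‖z‖ ^ 2) x‖ ≤ 2 * max 1 ‖x‖ := by
  obtain ⟨i, rfl⟩ := Nat.exists_eq_add_of_le' hi
  have h_fderiv : fderiv ℝ (fun z : E => ‖z‖ ^ 2) = (2 : ℝ) • ⇑(innerSL ℝ (E := E)) := by
    rw [fderiv_norm_sq]
    ext; simp [two_mul]
  rw [← norm_iteratedFDeriv_fderiv, h_fderiv,
    iteratedFDeriv_const_smul_apply (innerSL ℝ).contDiff.contDiffAt, norm_smul, Real.norm_two]
  gcongr
  calc ‖iteratedFDeriv ℝ i (innerSL ℝ (E := E)) x‖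
      ≤ ‖innerSL ℝ (E := E)‖ * max 1 ‖x‖ := norm_iteratedFDeriv_clm_le _ i x
    _ ≤ 1 * max 1 ‖x‖ := by gcongr; exact norm_innerSL_le ℝ
    _ = max 1 ‖x‖ := one_mul _

lemma jetBoundAt_comp_norm_sq {D : ℝ} (hη : 0 < η) (hη1 : η ≤ 1) (hD : 2 * max 1 ‖x‖ ≤ D)
    (hf : ContDiff ℝ N f) (hfB : JetBoundAt η N B f (‖x‖ ^ 2)) :
    JetBoundAt η N (N.factorial * B * D ^ N) (fun z : E => f (‖z‖ ^ 2)) x := by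
  have hD1 : 1 ≤ D := by linarith [le_max_left 1 ‖x‖]
  refine JetBoundAt.comp hη hD1 hf (contDiff_norm_sq ℝ) hfB fun i hi _ => ?_
  have hDη : 1 ≤ D / η := (one_le_div hη).2 (hη1.trans hD1)
  calc ‖iteratedFDeriv ℝ i (fun z : E => ‖z‖ ^ 2) x‖
      ≤ D := (norm_iteratedFDeriv_norm_sq_le hi x).trans hD
    _ = η * (D / η) := (mul_div_cancel₀ D hη.ne').symm
    _ ≤ η * (D / η) ^ i := by
        gcongr
        exact le_self_pow₀ hDη (by omega)

lemma jetBoundAt_one_sub_cutoff (hη : 0 < η) (hθ01 : ∀ s, θ s ∈ Icc 0 1)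
    (hθC : ∀ j : ℕ, 1 ≤ j → j ≤ N → ∀ s, |iteratedDeriv j θ s| ≤ C₀ * (η ^ j)⁻¹) (s : ℝ) :
    JetBoundAt η N (max 1 C₀) (fun t => 1 - θ t) s := fun j hj => by
  rw [norm_iteratedFDeriv_eq_norm_iteratedDeriv, Real.norm_eq_abs]
  rcases Nat.eq_zero_or_pos j with rfl | hj0
  · rw [iteratedDeriv_zero, pow_zero, div_one]
    obtain ⟨hθ_nonneg, hθ_le_one⟩ := hθ01 s
    exact (abs_le.2 ⟨by linarith, by linarith⟩).trans (le_max_left _ _)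
  · rw [iteratedDeriv_const_sub hj0, iteratedDeriv_neg, abs_neg]
    refine (hθC j hj0 hj s).trans ?_
    rw [← div_eq_mul_inv]
    gcongr
    exact le_max_right _ _

lemma nearJetZero_one_sub_cutoff {n : ℕ} (hη : 0 < η) (hη3 : η < 1 / 3) (hnN : n + 1 ≤ N)
    (hθ : IsCutoffProfile N C₀ η θ) (hψ : ContDiff ℝ n ψ)
    (hψ0 : ∀ x, 1 < ‖x‖ → ψ x = 0)
    (hx : x ∈ tsupport (fun z : E => 1 - θ (‖z‖ ^ 2)) ∩ tsupport ψ) :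
    NearJetZero η (4 * η) (N.factorial * max 1 C₀ * 5 ^ N) n (fun z => 1 - θ (‖z‖ ^ 2)) ψ x := by
  have hx_lower : 1 - 3 * η ≤ ‖x‖ ^ 2 := le_norm_sq_of_mem_tsupport_one_sub_cutoff hθ.eq_one hx.1
  have hx_upper : ‖x‖ ≤ 1 := mem_closedBall_zero_iff.1 (tsupport_subset_closedBall hψ0 hx.2)
  have hx0 : x ≠ 0 := by
    rintro rfl
    norm_num at hx_lower
    linarith
  obtain ⟨y, hy, hxy⟩ := exists_norm_eq_one_dist_eq hx0
  refine ⟨y, ?_, fun j hj => iteratedFDeriv_eq_zero_of_mem_closure_compl_tsupport hψ hj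
    (mem_closure_compl_tsupport_of_norm_eq_one hψ0 hy), fun z hz => ?_⟩
  · rw [hxy, abs_le]
    constructor <;> nlinarith [norm_nonneg x]
  · have hz_norm : ‖z‖ ≤ 1 + 4 * η := by
      linarith [norm_le_norm_add_norm_sub' z y, mem_closedBall_iff_norm.1 hz]
    exact (jetBoundAt_comp_norm_sq hη (by linarith)
      (by rcases max_cases 1 ‖z‖ with h | h <;> linarith) (contDiff_const.sub hθ.contDiff)
      (jetBoundAt_one_sub_cutoff hη hθ.mem_Icc hθ.abs_iteratedDeriv_le _)).mono_order hnN

variable [MeasurableSpace E] [BorelSpace E]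

theorem WBound.one_sub_cutoff_mul (hη : 0 < η) (hη3 : η < 1 / 3)
    (hθ : IsCutoffProfile N C₀ η θ) (hlk : l ≤ k) (hkN : k ≤ N)
    (hψ : WBound k A ψ) (hψ0 : ∀ x, 1 < ‖x‖ → ψ x = 0) :
    WBound l (8 ^ N * (N.factorial * max 1 C₀ * 5 ^ N) * η ^ (k - l) * A)
      (fun x => (1 - θ (‖x‖ ^ 2)) * ψ x) := by
  set K : ℝ := N.factorial * max 1 C₀ * 5 ^ N
  have hA : 0 ≤ A := hψ.nonneg
  have hφ : ContDiff ℝ N (fun x : E => 1 - θ (‖x‖ ^ 2)) :=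
    contDiff_const.sub (hθ.contDiff.comp (contDiff_norm_sq ℝ))
  have h8 : (8 : ℝ) ^ k ≤ 8 ^ N := pow_le_pow_right₀ (by norm_num) hkN
  cases k with
  | zero =>
    obtain rfl : l = 0 := Nat.le_zero.1 hlk
    have h_one_le : 1 ≤ 8 ^ N * K := by
      have h_factorial : (1 : ℝ) ≤ N.factorial := mod_cast N.factorial_pos
      exact one_le_mul_of_one_le_of_one_le (one_le_pow₀ (by norm_num))
        (one_le_mul_of_one_le_of_one_le
          (one_le_mul_of_one_le_of_one_le h_factorial (le_max_left 1 C₀))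
          (one_le_pow₀ (by norm_num)))
    refine (hψ.bounded_mul (K := 1) hφ.continuous.measurable fun x => ?_).mono ?_
    · obtain ⟨hθ_nonneg, hθ_le_one⟩ := hθ.mem_Icc (‖x‖ ^ 2)
      exact abs_le.2 ⟨by linarith, by linarith⟩
    · rw [Nat.sub_self, pow_zero, mul_one]
      gcongr
  | succ n =>
    refine (hψ.mul_of_nearJetZero hη (by linarith) (by linarith) (by positivity)
      (hφ.of_le (mod_cast hkN)) (fun x hx => nearJetZero_one_sub_cutoff hη hη3 hkN hθ
        hψ.1 hψ0 hx) hlk).mono ?_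
    calc (2 * (4 * η)) ^ (n + 1) * K * A / η ^ l
        = 8 ^ (n + 1) * K * η ^ (n + 1 - l) * A := by
          rw [pow_sub₀ η hη.ne' hlk, show 2 * (4 * η) = 8 * η by ring, mul_pow]; ring
      _ ≤ 8 ^ N * K * η ^ (n + 1 - l) * A := by gcongr

theorem WBound.cutoff_mul (hη : 0 < η) (hη3 : η < 1 / 3)
    (hθ : IsCutoffProfile N C₀ η θ) (hkN : k ≤ N)
    (hψ : WBound k A ψ) (hψ0 : ∀ x, 1 < ‖x‖ → ψ x = 0) :
    WBound k ((1 + 8 ^ N * (N.factorial * max 1 C₀ * 5 ^ N)) * A) (fun x => θ (‖x‖ ^ 2) * ψ x) := by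
  convert hψ.sub (hψ.one_sub_cutoff_mul hη hη3 hθ le_rfl hkN hψ0) using 1
  · rw [Nat.sub_self, pow_zero]; ring
  · ext x; simp only [Pi.sub_apply]; ring

end RadialCutoff

universe u

theorem cutoff_estimates_general (N : ℕ) (C₀ : ℝ) :
    ∃ C : ℝ, 0 < C ∧ ∀ (E : Type u) [NormedAddCommGroup E] [InnerProductSpace ℝ E]
      [MeasurableSpace E] [BorelSpace E], ∀ η : ℝ, 0 < η → η < 1 / 3 →
      ∀ θ : ℝ → ℝ, IsCutoffProfile N C₀ η θ →
        (∀ k : ℕ, k ≤ N → ∀ (ψ : E → ℝ) (A : ℝ),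
          WBound k A ψ → (∀ x, 1 < ‖x‖ → ψ x = 0) →
          WBound k (C * A) (fun x => θ (‖x‖ ^ 2) * ψ x)) ∧
        (∀ k l : ℕ, l ≤ k → k ≤ N → ∀ (ψ : E → ℝ) (A : ℝ),
          WBound k A ψ → (∀ x, 1 < ‖x‖ → ψ x = 0) →
          WBound l (C * η ^ (k - l) * A) (fun x => (1 - θ (‖x‖ ^ 2)) * ψ x)) := by
  refine ⟨1 + 8 ^ N * (N.factorial * max 1 C₀ * 5 ^ N), by positivity, ?_⟩
  intro E _ _ _ _ η hη hη3 θ hθ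
  refine ⟨fun k hk ψ A hψ hψ0 => hψ.cutoff_mul hη hη3 hθ hk hψ0,
    fun k l hlk hk ψ A hψ hψ0 => ?_⟩
  have hA : 0 ≤ A := hψ.nonneg
  refine (hψ.one_sub_cutoff_mul hη hη3 hθ hlk hk hψ0).mono ?_
  gcongr
  exact le_add_of_nonneg_left zero_le_one

/-- **Cut-off estimates.**  Let `η ∈ (0,1/4)` and `θ` be a smooth compactly
supported function with `0 ≤ θ ≤ 1`, `θ = 0` on `{|s| ≥ 1−2η}`, `θ = 1` on
`{|s| ≤ 1−3η}` and `|θ^{(j)}| ≤ C₀η^{−j}` for `j = 1,2,3`, and set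
`Θ(x) = θ(|x|²)`.  Then there is `C`, depending only on `d` and `C₀`, with
(i) `‖Θψ‖_{W^{k,∞}} ≤ C‖ψ‖_{W^{k,∞}}` for `k ∈ {0,1,2}` and `ψ ∈ W^{k,∞}`
vanishing outside the closed unit ball, and (ii)
`‖(1−Θ)ψ‖_{W^{ℓ,∞}} ≤ Cη^{k−ℓ}‖ψ‖_{W^{k,∞}}` for `0 ≤ ℓ ≤ k ≤ 3` and such `ψ`. -/
theorem cutoff_estimates (d : ℕ) (hd : 1 ≤ d) (C₀ : ℝ) (hC₀ : 0 < C₀) :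
    ∃ C : ℝ, 0 < C ∧ ∀ η : ℝ, 0 < η → η < 1 / 4 →
      ∀ θ : ℝ → ℝ, ContDiff ℝ (⊤ : ℕ∞) θ → HasCompactSupport θ →
        (∀ s, 0 ≤ θ s ∧ θ s ≤ 1) →
        (∀ s : ℝ, 1 - 2 * η ≤ |s| → θ s = 0) →
        (∀ s : ℝ, |s| ≤ 1 - 3 * η → θ s = 1) →
        (∀ j : ℕ, 1 ≤ j → j ≤ 3 → ∀ s, |iteratedDeriv j θ s| ≤ C₀ * (η ^ j)⁻¹) →
        (∀ k : ℕ, k ≤ 2 →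
          ∀ (ψ : EuclideanSpace ℝ (Fin d) → ℝ) (A : ℝ),
            WBound k A ψ → (∀ x, 1 < ‖x‖ → ψ x = 0) →
            WBound k (C * A) (fun x => θ (‖x‖ ^ 2) * ψ x)) ∧
        (∀ k l : ℕ, l ≤ k → k ≤ 3 →
          ∀ (ψ : EuclideanSpace ℝ (Fin d) → ℝ) (A : ℝ),
            WBound k A ψ → (∀ x, 1 < ‖x‖ → ψ x = 0) →
            WBound l (C * η ^ (k - l) * A) (fun x => (1 - θ (‖x‖ ^ 2)) * ψ x)) := by
  obtain ⟨C, hC, h⟩ := cutoff_estimates_general 3 C₀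
  refine ⟨C, hC, fun η hη hη4 θ hθ _ hθ01 _ hθ1 hθC => ?_⟩
  obtain ⟨hmul, hsub⟩ := h (EuclideanSpace ℝ (Fin d)) η hη (by linarith) θ
    ⟨contDiff_infty.1 hθ 3, hθ01, hθ1, hθC⟩
  exact ⟨fun k hk => hmul k (by omega), hsub⟩
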